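/- arXiv:1311.5494 — 2 statements merged into one kernel-verified Lean document; each statement's English description precedes it below -/
import Mathlib

section
/- Let R be a commutative ring, G a Lie algebra over R, and H a characteristic Lie ideal of G. Then there exists a homomorphism of Lie algebras σ : Der(G) → Der(G ⧸ H) from the Lie algebra of derivations of G to the Lie algebra of derivations of the quotient G ⧸ H such that σ(D)(π(x)) = π(D(x)) for every derivation D of G and every x ∈ G, where π : G → G ⧸ H is the quotient map. (The paper's proposition on the induced morphism between split extension classifiers, instantiated in Lie algebras.) -/
section

variable {R L : Type*} [CommRing R] [LieRing L] [LieAlgebra R L] (I : LieIdeal R L)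

/-- The Lie subalgebra of `Der(L)` consisting of the derivations that map the ideal `I` into
itself; `I` is characteristic exactly when this is all of `Der(L)`. -/
def lieDerivationStabilizer : LieSubalgebra R (LieDerivation R L L) where
  carrier := {D | ∀ x ∈ I, D x ∈ I}
  zero_mem' := fun _ _ ↦ I.zero_mem
  add_mem' := fun hD hE x hx ↦ I.add_mem (hD x hx) (hE x hx)
  smul_mem' := fun r _ hD x hx ↦ I.smul_mem r (hD x hx)
  lie_mem' := fun hD hE x hx ↦ I.sub_mem (hD _ (hE x hx)) (hE _ (hD x hx))

variable {I}

theorem mem_lieDerivationStabilizer {D : LieDerivation R L L} :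
    D ∈ lieDerivationStabilizer I ↔ ∀ x ∈ I, D x ∈ I :=
  Iff.rfl

theorem lieDerivation_ext_of_quotient {M : Type*} [AddCommGroup M] [Module R M]
    [LieRingModule (L ⧸ I) M] [LieModule R (L ⧸ I) M] {D E : LieDerivation R (L ⧸ I) M}
    (h : ∀ x : L, D (LieSubmodule.Quotient.mk x) = E (LieSubmodule.Quotient.mk x)) : D = E :=
  LieDerivation.ext <| (LieSubmodule.Quotient.surjective_mk' I).forall.2 h

namespace lieDerivationStabilizer

/-- The derivation of `L ⧸ I` induced by a derivation of `L` that maps `I` into itself. -/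
def mapQ (D : lieDerivationStabilizer I) : LieDerivation R (L ⧸ I) (L ⧸ I) where
  toLinearMap := I.toSubmodule.mapQ I.toSubmodule D.1.toLinearMap D.2
  leibniz' := by
    refine (LieSubmodule.Quotient.surjective_mk' I).forall₂.2 fun x y ↦ ?_
    exact congrArg (LieSubmodule.Quotient.mk' I) (D.1.apply_lie_eq_sub x y)

@[simp]
theorem mapQ_mk (D : lieDerivationStabilizer I) (x : L) :
    mapQ D (LieSubmodule.Quotient.mk x) = LieSubmodule.Quotient.mk (D.1 x) :=
  rfl

variable (I) in
/-- Passage to the quotient, as a morphism of Lie algebras from the derivations of `L` that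
map `I` into itself to `Der(L ⧸ I)`. -/
def mapQLieHom : lieDerivationStabilizer I →ₗ⁅R⁆ LieDerivation R (L ⧸ I) (L ⧸ I) where
  toFun := mapQ
  map_add' _ _ := lieDerivation_ext_of_quotient fun _ ↦ rfl
  map_smul' _ _ := lieDerivation_ext_of_quotient fun _ ↦ rfl
  map_lie' {D E} := lieDerivation_ext_of_quotient fun x ↦ by
    calc mapQ ⁅D, E⁆ (LieSubmodule.Quotient.mk x)
      _ = LieSubmodule.Quotient.mk (D.1 (E.1 x)) - LieSubmodule.Quotient.mk (E.1 (D.1 x)) := rfl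
      _ = ⁅mapQ D, mapQ E⁆ (LieSubmodule.Quotient.mk x) := by
        simp only [LieDerivation.lie_apply, mapQ_mk]

end lieDerivationStabilizer

end

/-- A characteristic Lie ideal `H` of `G` induces a morphism of Lie algebras
`Der(G) → Der(G ⧸ H)`. -/
theorem actor_quotient_characteristic
    (R : Type*) [CommRing R] (G : Type*) [LieRing G] [LieAlgebra R G]
    (H : LieIdeal R G)
    (hH : ∀ D : LieDerivation R G G, ∀ h ∈ H, D h ∈ H) :
    ∃ σ : LieDerivation R G G →ₗ⁅R⁆ LieDerivation R (G ⧸ H) (G ⧸ H),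
      ∀ D : LieDerivation R G G, ∀ x : G,
        (σ D) (LieSubmodule.Quotient.mk (N := H) x) =
          LieSubmodule.Quotient.mk (N := H) (D x) := by
  have stabilizer_eq_top : lieDerivationStabilizer H = ⊤ :=
    eq_top_iff.2 fun D _ ↦ mem_lieDerivationStabilizer.2 (hH D)
  let toStabilizer : LieDerivation R G G →ₗ⁅R⁆ lieDerivationStabilizer H :=
    (LieSubalgebra.inclusion stabilizer_eq_top.ge).comp LieSubalgebra.topEquiv.symm.toLieHom
  exact ⟨(lieDerivationStabilizer.mapQLieHom H).comp toStabilizer,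
    fun D x ↦ lieDerivationStabilizer.mapQ_mk (toStabilizer D) x⟩
end

section
/- Equip X = ℤ × ℤ × ℤ, with componentwise addition, with the multiplication (a,α,β)·(b,γ,δ) = (0, aδ + bβ + αγ, aγ + bα). Then: (1) X is a non-unital non-associative ring (multiplication is left and right distributive over addition); (2) the additive subgroup G = { (a,α,β) ∈ X | a = 0 } is a two-sided ideal of X; (3) the additive subgroup I = { (a,α,β) ∈ X | a = 0 and β = 0 } equals the additive subgroup of X generated by all products g·g' with g, g' ∈ G (the derived subobject [G,G] of the non-unital non-associative ring G), and I is a two-sided ideal of G; (4) I is not a two-sided ideal of X: for x = (1,0,0) and i = (0,1,0) ∈ I one has x·i = (0,0,1) ∉ I. Hence in the semi-abelian category of non-unital non-associative rings the derived subobject [G,G] need not be characteristic in G. -/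
/-- The multiplication `(a,α,β)·(b,γ,δ) = (0, aδ + bβ + αγ, aγ + bα)` on `ℤ × ℤ × ℤ`. -/
def mulX (x y : ℤ × ℤ × ℤ) : ℤ × ℤ × ℤ :=
  (0, x.1 * y.2.2 + y.1 * x.2.2 + x.2.1 * y.2.1, x.1 * y.2.1 + y.1 * x.2.1)

/-- The additive subgroup `G = { (a,α,β) | a = 0 }` of `X = ℤ × ℤ × ℤ`. -/
def Gsub : AddSubgroup (ℤ × ℤ × ℤ) where
  carrier := {p | p.1 = 0}
  zero_mem' := rfl
  add_mem' := by
    intro a b ha hb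
    simp only [Set.mem_setOf_eq, Prod.fst_add] at *
    omega
  neg_mem' := by
    intro a ha
    simp only [Set.mem_setOf_eq, Prod.fst_neg] at *
    omega

/-- The additive subgroup `I = { (a,α,β) | a = 0 ∧ β = 0 }` of `X = ℤ × ℤ × ℤ`. -/
def Isub : AddSubgroup (ℤ × ℤ × ℤ) where
  carrier := {p | p.1 = 0 ∧ p.2.2 = 0}
  zero_mem' := ⟨rfl, rfl⟩
  add_mem' := by
    intro a b ha hb
    simp only [Set.mem_setOf_eq, Prod.fst_add, Prod.snd_add] at *
    omega
  neg_mem' := by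
    intro a ha
    simp only [Set.mem_setOf_eq, Prod.fst_neg, Prod.snd_neg] at *
    omega

/-!
Write `G = ℤx + ℤy` with `x = (0, 1, 0)` and `y = (0, 0, 1)`. The only nonzero product of these
generators is `x · x = x`, so the products of elements of `G` already form the subgroup `I = ℤx`.
But multiplication by `(1, 0, 0)` interchanges `x` and `y`, so it carries `I` to `ℤy`.
-/

theorem mem_Gsub {p : ℤ × ℤ × ℤ} : p ∈ Gsub ↔ p.1 = 0 :=
  Iff.rfl

theorem mem_Isub {p : ℤ × ℤ × ℤ} : p ∈ Isub ↔ p.1 = 0 ∧ p.2.2 = 0 :=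
  Iff.rfl

theorem Isub_le_Gsub : Isub ≤ Gsub :=
  fun _ hp => mem_Gsub.2 (mem_Isub.1 hp).1

theorem mulX_comm (x y : ℤ × ℤ × ℤ) : mulX x y = mulX y x := by
  ext <;> simp only [mulX] <;> ring

theorem mulX_add (x y z : ℤ × ℤ × ℤ) : mulX x (y + z) = mulX x y + mulX x z := by
  ext <;> simp only [mulX, Prod.fst_add, Prod.snd_add] <;> ring

theorem add_mulX (x y z : ℤ × ℤ × ℤ) : mulX (x + y) z = mulX x z + mulX y z := by
  rw [mulX_comm, mulX_add, mulX_comm z x, mulX_comm z y]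

theorem mulX_mem_Gsub (x y : ℤ × ℤ × ℤ) : mulX x y ∈ Gsub :=
  mem_Gsub.2 rfl

theorem mulX_of_mem_Gsub {g g' : ℤ × ℤ × ℤ} (hg : g ∈ Gsub) (hg' : g' ∈ Gsub) :
    mulX g g' = (0, g.2.1 * g'.2.1, 0) := by
  simp [mulX, mem_Gsub.1 hg, mem_Gsub.1 hg']

theorem mulX_mem_Isub {g g' : ℤ × ℤ × ℤ} (hg : g ∈ Gsub) (hg' : g' ∈ Gsub) :
    mulX g g' ∈ Isub := by
  rw [mulX_of_mem_Gsub hg hg']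
  exact mem_Isub.2 ⟨rfl, rfl⟩

theorem mulX_zero_one_zero_of_mem_Isub {p : ℤ × ℤ × ℤ} (hp : p ∈ Isub) :
    mulX p (0, 1, 0) = p := by
  obtain ⟨h₁, h₃⟩ := mem_Isub.1 hp
  ext <;> simp [mulX, h₁, h₃]

theorem setOf_mulX_Gsub_eq_Isub :
    {p | ∃ g ∈ Gsub, ∃ g' ∈ Gsub, p = mulX g g'} = (Isub : Set (ℤ × ℤ × ℤ)) := by
  ext p
  constructor
  · rintro ⟨g, hg, g', hg', rfl⟩
    exact mulX_mem_Isub hg hg'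
  · intro hp
    exact ⟨p, Isub_le_Gsub hp, (0, 1, 0), mem_Gsub.2 rfl, (mulX_zero_one_zero_of_mem_Isub hp).symm⟩

theorem Isub_eq_closure_mulX_Gsub :
    Isub = AddSubgroup.closure {p | ∃ g ∈ Gsub, ∃ g' ∈ Gsub, p = mulX g g'} := by
  rw [setOf_mulX_Gsub_eq_Isub, AddSubgroup.closure_eq]

theorem one_zero_zero_mulX (p : ℤ × ℤ × ℤ) : mulX (1, 0, 0) p = (0, p.2.2, p.2.1) := by
  simp [mulX]

theorem zero_one_zero_mem_Isub : ((0, 1, 0) : ℤ × ℤ × ℤ) ∈ Isub :=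
  mem_Isub.2 ⟨rfl, rfl⟩

theorem zero_zero_one_notMem_Isub : ((0, 0, 1) : ℤ × ℤ × ℤ) ∉ Isub :=
  fun h => one_ne_zero (mem_Isub.1 h).2

theorem not_forall_mulX_mem_Isub :
    ¬ ∀ x : ℤ × ℤ × ℤ, ∀ i ∈ Isub, mulX x i ∈ Isub ∧ mulX i x ∈ Isub := by
  intro h
  have hmem : mulX (1, 0, 0) (0, 1, 0) ∈ Isub := (h _ _ zero_one_zero_mem_Isub).1
  rw [one_zero_zero_mulX] at hmem
  exact zero_zero_one_notMem_Isub hmem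

/-- The derived subobject `[G,G]` of the non-unital non-associative ring `G` inside
`X = ℤ ⋉ G` is an ideal of `G` but not an ideal of `X`. -/
theorem derived_not_characteristic :
    -- (1) `mulX` is left and right distributive, so `X` is a non-unital non-assoc. ring
    (∀ x y z : ℤ × ℤ × ℤ,
      mulX x (y + z) = mulX x y + mulX x z ∧ mulX (x + y) z = mulX x z + mulX y z) ∧
    -- (2) `G` is a two-sided ideal of `X`
    (∀ x : ℤ × ℤ × ℤ, ∀ g ∈ Gsub, mulX x g ∈ Gsub ∧ mulX g x ∈ Gsub) ∧
    -- (3) `I` is the additive subgroup generated by products of elements of `G`,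
    --     and `I` is a two-sided ideal of `G`
    (Isub = AddSubgroup.closure {p | ∃ g ∈ Gsub, ∃ g' ∈ Gsub, p = mulX g g'} ∧
      (Isub : Set (ℤ × ℤ × ℤ)) ⊆ Gsub ∧
      (∀ g ∈ Gsub, ∀ i ∈ Isub, mulX g i ∈ Isub ∧ mulX i g ∈ Isub)) ∧
    -- (4) `I` is not a two-sided ideal of `X`
    (mulX ((1 : ℤ), (0 : ℤ), (0 : ℤ)) ((0 : ℤ), (1 : ℤ), (0 : ℤ)) =
        ((0 : ℤ), (0 : ℤ), (1 : ℤ)) ∧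
      ((0 : ℤ), (1 : ℤ), (0 : ℤ)) ∈ Isub ∧
      ((0 : ℤ), (0 : ℤ), (1 : ℤ)) ∉ Isub ∧
      ¬ (∀ x : ℤ × ℤ × ℤ, ∀ i ∈ Isub, mulX x i ∈ Isub ∧ mulX i x ∈ Isub)) := by
  refine ⟨fun x y z => ⟨mulX_add x y z, add_mulX x y z⟩,
    fun x g _ => ⟨mulX_mem_Gsub x g, mulX_mem_Gsub g x⟩,
    ⟨Isub_eq_closure_mulX_Gsub, Isub_le_Gsub, fun g hg i hi => ?_⟩,
    one_zero_zero_mulX _, zero_one_zero_mem_Isub, zero_zero_one_notMem_Isub,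
    not_forall_mulX_mem_Isub⟩
  have hiG : i ∈ Gsub := Isub_le_Gsub hi
  exact ⟨mulX_mem_Isub hg hiG, mulX_mem_Isub hiG hg⟩
end
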